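/- arXiv:2509.06188 — 2 statements merged into one kernel-verified Lean document; each statement's English description precedes it below -/
import Mathlib

section
/- Let c₁ be a nonzero real number. The equation e^y = y/c₁ + 1 has a real, positive solution y if and only if 0 < c₁ < 1. (Lemma 2, existence.) -/
/-!
For `y > 0` the strict inequality `y + 1 < exp y` turns the equation into `y < y / c₁`, which
forces `0 < c₁ < 1`. Conversely, the intermediate value theorem applies to
`exp y - (y / c₁ + 1)` on `[-log c₁, 2 / c₁]`. The left endpoint is the minimiser of this
function, where `log c₁ ≤ c₁ - 1` shows that its value is nonpositive; at the right endpoint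
`1 + y + y ^ 2 / 2 ≤ exp y` shows that it is nonnegative.
-/

/-- Lemma 2 (existence): for nonzero c₁, the equation e^y = y/c₁ + 1 has a real positive
solution iff 0 < c₁ < 1. -/
theorem exp_equation_positive_solution_iff
    (c₁ : ℝ) (hc₁ : c₁ ≠ 0) :
    (∃ y : ℝ, 0 < y ∧ Real.exp y = y / c₁ + 1) ↔ (0 < c₁ ∧ c₁ < 1) := by
  constructor
  · rintro ⟨y, hy, h⟩
    have h1 : y < y / c₁ := by linarith [Real.add_one_lt_exp hy.ne']
    have hc : 0 < c₁ := (div_pos_iff_of_pos_left hy).1 (hy.trans h1)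
    refine ⟨hc, ?_⟩
    rw [lt_div_iff₀ hc] at h1
    nlinarith
  · rintro ⟨hc, hc1⟩
    have hlog : Real.log c₁ < 0 := Real.log_neg hc hc1
    have hle : -Real.log c₁ ≤ 2 / c₁ := by
      have h1 := Real.log_le_sub_one_of_pos (inv_pos.2 hc)
      rw [Real.log_inv] at h1
      have h2 : 0 < c₁⁻¹ := inv_pos.2 hc
      rw [div_eq_mul_inv]
      linarith
    have hcont : ContinuousOn (fun y : ℝ => Real.exp y - (y / c₁ + 1))
        (Set.Icc (-Real.log c₁) (2 / c₁)) := by fun_prop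
    have hleft : Real.exp (-Real.log c₁) - (-Real.log c₁ / c₁ + 1) ≤ 0 := by
      rw [Real.exp_neg, Real.exp_log hc]
      have h1 := Real.log_le_sub_one_of_pos hc
      have h2 : c₁⁻¹ - (-Real.log c₁ / c₁ + 1) = (1 + Real.log c₁ - c₁) / c₁ := by
        field_simp
        ring
      rw [h2]
      exact div_nonpos_of_nonpos_of_nonneg (by linarith) hc.le
    have hright : 0 ≤ Real.exp (2 / c₁) - (2 / c₁ / c₁ + 1) := by
      have hpos : 0 < 2 / c₁ := by positivity
      have h1 := Real.quadratic_le_exp_of_nonneg hpos.le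
      -- The endpoint `2 / c₁` is chosen so that the quadratic term equals the linear term `y / c₁`.
      have h2 : (2 / c₁) ^ 2 / 2 = 2 / c₁ / c₁ := by
        field_simp
      linarith
    obtain ⟨y, hy, h⟩ := intermediate_value_Icc hle hcont ⟨hleft, hright⟩
    exact ⟨y, by linarith [hy.1], sub_eq_zero.1 h⟩
end

section
/- Single-interval error bound (Part 1 of the proof of Theorem 1): suppose the trajectory x : [0, T] → ℝ^N satisfies x(0) = x₀ and ẋ(t) = f(x(t)) + g(x(t))·u₁ on [0, T], where the constant input u₁ = (1/T)·G·(x_tg − x₀) satisfies ‖u₁‖_∞ ≤ 1 and g₀·G = I_N. Then ‖x_tg − x(T)‖_∞ ≤ (c/D_S)(e^{T·D_S} − 1), where c = ‖f(x₀)‖_∞ + (D_S+1)‖x_tg − x₀‖_∞. -/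
/-!
The straight line `s ↦ x₀ + (s / T) • (xtg - x₀)` runs from `x₀` to `xtg` and has velocity
`g x₀ u₁`, because `g x₀ ∘ G = id`. The deviation `y` of the trajectory from this line starts at
`0`, ends at `x T - xtg`, and satisfies
`‖y'‖ = ‖f x + (g x - g x₀) u₁‖ ≤ ‖f x₀‖ + DS * ‖x - x₀‖ ≤ DS * ‖y‖ + (‖f x₀‖ + DS * ‖xtg - x₀‖)`.
Grönwall's inequality then gives the bound, even with `DS * ‖xtg - x₀‖` in place of
`(DS + 1) * ‖xtg - x₀‖` in the constant.
-/

/-- Single-interval error bound (Part 1 of the proof of Theorem 1): under the constant input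
u₁ = (1/T)·G·(x_tg − x₀) with ‖u₁‖_∞ ≤ 1 and g₀G = I, the nonlinear trajectory satisfies
‖x_tg − x(T)‖_∞ ≤ (c/D_S)(e^{T·D_S} − 1). -/
theorem single_interval_error_bound
    (N m : ℕ)
    (f : (Fin N → ℝ) → (Fin N → ℝ))
    (g : (Fin N → ℝ) → ((Fin m → ℝ) →L[ℝ] (Fin N → ℝ)))
    (Df Dg : NNReal)
    (hf : LipschitzWith Df f)
    (hg : LipschitzWith Dg g)
    (DS : ℝ) (hDS : DS = (Df : ℝ) + (Dg : ℝ)) (hDSpos : 0 < DS)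
    (x₀ xtg : Fin N → ℝ)
    (G : (Fin N → ℝ) →L[ℝ] (Fin m → ℝ))
    (hG : ∀ v : Fin N → ℝ, g x₀ (G v) = v)
    (T : ℝ) (hT : 0 < T)
    (u₁ : Fin m → ℝ) (hu₁def : u₁ = (1 / T) • G (xtg - x₀))
    (hu₁norm : ‖u₁‖ ≤ 1)
    (x : ℝ → (Fin N → ℝ)) (hx0 : x 0 = x₀)
    (hode : ∀ s ∈ Set.Icc (0 : ℝ) T, HasDerivAt x (f (x s) + g (x s) u₁) s)
    (c : ℝ) (hc : c = ‖f x₀‖ + (DS + 1) * ‖xtg - x₀‖) :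
    ‖xtg - x T‖ ≤ (c / DS) * (Real.exp (T * DS) - 1) := by
  set d := xtg - x₀ with hd
  have hgu : g x₀ u₁ = (1 / T) • d := by rw [hu₁def, map_smul, hG]
  let y : ℝ → (Fin N → ℝ) := fun s => x s - x₀ - (s / T) • d
  have hy : ∀ s ∈ Set.Icc (0 : ℝ) T,
      HasDerivAt y (f (x s) + g (x s) u₁ - (1 / T) • d) s := fun s hs =>
    ((hode s hs).sub_const x₀).sub (((hasDerivAt_id s).div_const T).smul_const d)
  have hbound : ∀ s ∈ Set.Ico (0 : ℝ) T,
      ‖f (x s) + g (x s) u₁ - (1 / T) • d‖ ≤ DS * ‖y s‖ + (‖f x₀‖ + DS * ‖d‖) := by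
    intro s hs
    have hF : ‖f (x s) - f x₀‖ ≤ Df * ‖x s - x₀‖ := hf.norm_sub_le _ _
    have hGu : ‖(g (x s) - g x₀) u₁‖ ≤ Dg * ‖x s - x₀‖ :=
      calc ‖(g (x s) - g x₀) u₁‖ ≤ ‖g (x s) - g x₀‖ * ‖u₁‖ := ContinuousLinearMap.le_opNorm _ _
        _ ≤ ‖g (x s) - g x₀‖ := mul_le_of_le_one_right (norm_nonneg _) hu₁norm
        _ ≤ Dg * ‖x s - x₀‖ := hg.norm_sub_le _ _
    have hsplit : f (x s) + g (x s) u₁ - (1 / T) • d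
        = f x₀ + (f (x s) - f x₀) + (g (x s) - g x₀) u₁ := by
      rw [← hgu, sub_apply]; abel
    have hline : ‖(s / T) • d‖ ≤ ‖d‖ := by
      rw [norm_smul, Real.norm_of_nonneg (div_nonneg hs.1 hT.le)]
      exact mul_le_of_le_one_left (norm_nonneg _) ((div_le_one hT).2 hs.2.le)
    have hxs : ‖x s - x₀‖ ≤ ‖y s‖ + ‖d‖ :=
      calc ‖x s - x₀‖ = ‖y s + (s / T) • d‖ := by simp [y]
        _ ≤ ‖y s‖ + ‖(s / T) • d‖ := norm_add_le _ _
        _ ≤ ‖y s‖ + ‖d‖ := by gcongr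
    have hmul := mul_le_mul_of_nonneg_left hxs hDSpos.le
    rw [hsplit]
    have hsum := norm_add₃_le (a := f x₀) (b := f (x s) - f x₀) (c := (g (x s) - g x₀) u₁)
    have hDx : (Df : ℝ) * ‖x s - x₀‖ + Dg * ‖x s - x₀‖ = DS * ‖x s - x₀‖ := by rw [hDS]; ring
    linarith
  have hgron := norm_le_gronwallBound_of_norm_deriv_right_le (δ := 0)
    (fun s hs => (hy s hs).continuousAt.continuousWithinAt)
    (fun s hs => (hy s ⟨hs.1, hs.2.le⟩).hasDerivWithinAt)
    (by simp [y, hx0]) hbound T ⟨hT.le, le_rfl⟩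
  simp only [gronwallBound_of_K_ne_0 hDSpos.ne', zero_mul, zero_add, sub_zero, mul_comm DS T] at hgron
  have hyT : ‖xtg - x T‖ = ‖y T‖ := by
    rw [← norm_neg]
    congr 1
    simp only [y, div_self hT.ne', one_smul, hd]
    abel
  have hexp : 0 ≤ Real.exp (T * DS) - 1 :=
    sub_nonneg.2 (Real.one_le_exp (mul_pos hT hDSpos).le)
  rw [hyT]
  refine hgron.trans ?_
  gcongr
  rw [hc]
  linarith [norm_nonneg d]
end
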